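/- Let X be an undirected graph and let f : Y → X be a covering such that Y has no loops (no half-arc u with s(u) = t(u)). Then for every integer p > 1 and every backtrack-free p-cycle h : c^p_U → Y, there exist a covering g : U → X, a morphism u : U → Y with f ∘ u = g, and an injective morphism c : c^p_U → U through which U is a p-cycle with an attached forest, such that u ∘ c = h. -/

import Mathlib

open CategoryTheory

namespace Paper

/-- An undirected graph: a set of nodes, a set of half-arcs, source and target maps
and an involution `i` on half-arcs with `s ∘ i = t`. -/
structure UGraph : Type 1 where
  nodes : Type
  half : Type
  s : half → nodes
  t : half → nodes
  inv : half → half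
  inv_inv : ∀ a, inv (inv a) = a
  s_inv : ∀ a, s (inv a) = t a

/-- A morphism of undirected graphs: maps on nodes and half-arcs commuting with
source, target and the involution. -/
@[ext]
structure UGraph.Hom (X Y : UGraph) where
  f0 : X.nodes → Y.nodes
  f1 : X.half → Y.half
  comm_s : ∀ a, Y.s (f1 a) = f0 (X.s a)
  comm_t : ∀ a, Y.t (f1 a) = f0 (X.t a)
  comm_inv : ∀ a, Y.inv (f1 a) = f1 (X.inv a)

/-- The category of undirected graphs. -/
instance : Category UGraph where
  Hom := UGraph.Hom
  id X := ⟨id, id, fun _ => rfl, fun _ => rfl, fun _ => rfl⟩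
  comp f g := ⟨g.f0 ∘ f.f0, g.f1 ∘ f.f1,
    fun a => by simp [Function.comp, g.comm_s, f.comm_s],
    fun a => by simp [Function.comp, g.comm_t, f.comm_t],
    fun a => by simp [Function.comp, g.comm_inv, f.comm_inv]⟩

@[simp] theorem UGraph.comp_f0 {X Y Z : UGraph} (f : X ⟶ Y) (g : Y ⟶ Z) :
    (f ≫ g).f0 = g.f0 ∘ f.f0 := rfl

@[simp] theorem UGraph.comp_f1 {X Y Z : UGraph} (f : X ⟶ Y) (g : Y ⟶ Z) :
    (f ≫ g).f1 = g.f1 ∘ f.f1 := rfl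

/-- two nodes are adjacent if some half-arc goes from one to the other. -/
def UGraph.adj (X : UGraph) (x y : X.nodes) : Prop :=
  ∃ u : X.half, X.s u = x ∧ X.t u = y

/-- An undirected graph is connected if any two nodes are joined by a finite
sequence of consecutively incident half-arcs. -/
def UGraph.Connected (X : UGraph) : Prop :=
  ∀ x y : X.nodes, Relation.ReflTransGen X.adj x y

/-- The undirected `p`-cycle `c^p_U` : nodes `ℤ/pℤ`, half-arcs `[n]⁺ = (n, true)`
and `[n]⁻ = (n, false)` with `s [n]⁺ = [n]`, `t [n]⁺ = [n+1]`, `i [n]⁺ = [n]⁻`. -/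
def cycleU (p : ℕ) : UGraph where
  nodes := ZMod p
  half := ZMod p × Bool
  s a := if a.2 then a.1 else a.1 + 1
  t a := if a.2 then a.1 + 1 else a.1
  inv a := (a.1, !a.2)
  inv_inv a := by simp
  s_inv a := by rcases a with ⟨n, _ | _⟩ <;> simp

/-- A `p`-cycle `h : c^p_U ⟶ X` is backtrack-free if `h₁([n+1]⁺) ≠ h₁([n]⁻)` for
all `n`. -/
def BFree {p : ℕ} {X : UGraph} (h : cycleU p ⟶ X) : Prop :=
  ∀ n : ZMod p, h.f1 (n + 1, true) ≠ h.f1 (n, false)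

/-- A morphism of undirected graphs is a covering if it restricts to a bijection on
the half-arcs issued from each node. -/
def IsCovering {X Y : UGraph} (f : X ⟶ Y) : Prop :=
  ∀ x : X.nodes,
    Function.Bijective (fun u : {u : X.half // X.s u = x} =>
      (⟨f.f1 u.1, by rw [f.comm_s, u.2]⟩ : {v : Y.half // Y.s v = f.f0 x}))

end Paper

namespace Paper

/-- `U` is a `p`-cycle with an attached forest via `c : c^p_U ⟶ U` : `U` is
connected, `c` is injective on nodes and on half-arcs, and every backtrack-free
cycle of `U` (of any length) has image contained in the image of `c`. -/
def CycleForest (p : ℕ) {U : UGraph} (c : cycleU p ⟶ U) : Prop :=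
  U.Connected ∧ Function.Injective c.f0 ∧ Function.Injective c.f1 ∧
    ∀ q : ℕ, 1 ≤ q → ∀ d : cycleU q ⟶ U, BFree d →
      (∀ n : ZMod q, ∃ m : ZMod p, d.f0 n = c.f0 m) ∧
        (∀ a : ZMod q × Bool, ∃ b : ZMod p × Bool, d.f1 a = c.f1 b)

section Construction

variable {Y : UGraph} {p : ℕ} (h : cycleU p ⟶ Y)

/-- endpoint in `Y` of a path (list of half-arcs, last one first) issued from `h [n]`. -/
def pEnd (n : ZMod p) : List Y.half → Y.nodes
  | [] => h.f0 n
  | a :: _ => Y.t a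

/-- reduced paths issued from `h [n]` which leave the cycle at once. -/
def Valid (n : ZMod p) : List Y.half → Prop
  | [] => True
  | [a] => Y.s a = h.f0 n ∧ a ≠ h.f1 (n, true) ∧ a ≠ h.f1 (n - 1, false)
  | a :: b :: l => Y.s a = Y.t b ∧ a ≠ Y.inv b ∧ Valid n (b :: l)

open Classical in
/-- follow the half-arc `a`. -/
noncomputable def stp : ZMod p × List Y.half → Y.half → ZMod p × List Y.half
  | (n, []), a => if a = h.f1 (n, true) then (n + 1, [])
      else if a = h.f1 (n - 1, false) then (n - 1, []) else (n, [a])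
  | (n, b :: l), a => if a = Y.inv b then (n, l) else (n, a :: b :: l)

theorem UGraph.t_inv (X : UGraph) (a : X.half) : X.t (X.inv a) = X.s a := by
  rw [← X.s_inv, X.inv_inv]

theorem valid_tail {n : ZMod p} {b : Y.half} {l : List Y.half} (hv : Valid h n (b :: l)) :
    Valid h n l := by
  cases l with
  | nil => trivial
  | cons c l => exact hv.2.2

theorem valid_head {n : ZMod p} {b : Y.half} {l : List Y.half} (hv : Valid h n (b :: l)) :
    Y.s b = pEnd h n l := by
  cases l with
  | nil => exact hv.1
  | cons c l => exact hv.1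

theorem stp_valid {n : ZMod p} {l : List Y.half} (hv : Valid h n l) {a : Y.half}
    (ha : Y.s a = pEnd h n l) : Valid h (stp h (n, l) a).1 (stp h (n, l) a).2 := by
  cases l with
  | nil =>
    simp only [stp]
    split_ifs with h1 h2
    · trivial
    · trivial
    · exact ⟨ha, h1, h2⟩
  | cons b l =>
    simp only [stp]
    split_ifs with h1
    · exact valid_tail h hv
    · exact ⟨ha, h1, hv⟩

theorem h_t_true (n : ZMod p) : Y.t (h.f1 (n, true)) = h.f0 (n + 1) :=
  h.comm_t (n, true)

theorem h_t_false (n : ZMod p) : Y.t (h.f1 (n, false)) = h.f0 n :=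
  h.comm_t (n, false)

theorem h_s_true (n : ZMod p) : Y.s (h.f1 (n, true)) = h.f0 n :=
  h.comm_s (n, true)

theorem h_s_false (n : ZMod p) : Y.s (h.f1 (n, false)) = h.f0 (n + 1) :=
  h.comm_s (n, false)

theorem h_inv (n : ZMod p) (b : Bool) : Y.inv (h.f1 (n, b)) = h.f1 (n, !b) :=
  h.comm_inv (n, b)

theorem stp_end {n : ZMod p} {l : List Y.half} (hv : Valid h n l) {a : Y.half} :
    pEnd h (stp h (n, l) a).1 (stp h (n, l) a).2 = Y.t a := by
  cases l with
  | nil =>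
    simp only [stp]
    split_ifs with h1 h2
    · rw [h1, h_t_true]; rfl
    · rw [h2, h_t_false]; rfl
    · rfl
  | cons b l =>
    simp only [stp]
    split_ifs with h1
    · rw [h1, Y.t_inv]; exact (valid_head h hv).symm
    · rfl

theorem stp_cons {n : ZMod p} {b : Y.half} {l : List Y.half} (hv : Valid h n (b :: l)) :
    stp h (n, l) b = (n, b :: l) := by
  cases l with
  | nil => simp only [stp]; rw [if_neg hv.2.1, if_neg hv.2.2]
  | cons c l => simp only [stp]; rw [if_neg hv.2.1]

variable {h}

theorem stp_true (n : ZMod p) : stp h (n, []) (h.f1 (n, true)) = (n + 1, []) := by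
  simp [stp]

theorem stp_false (hbf : BFree h) (n : ZMod p) :
    stp h (n + 1, []) (h.f1 (n, false)) = (n, []) := by
  have := (hbf n).symm
  simp [stp, this]

theorem stp_stp (hbf : BFree h) {n : ZMod p} {l : List Y.half} (hv : Valid h n l) (a : Y.half) :
    stp h (stp h (n, l) a) (Y.inv a) = (n, l) := by
  cases l with
  | nil =>
    by_cases h1 : a = h.f1 (n, true)
    · subst h1
      rw [stp_true, h_inv]
      exact stp_false hbf n
    · by_cases h2 : a = h.f1 (n - 1, false)
      · have e : stp h (n, []) a = (n - 1, []) := by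
          simp only [stp]; rw [if_neg h1, if_pos h2]
        rw [e, h2, h_inv]
        simpa using stp_true (h := h) (n - 1)
      · have e : stp h (n, []) a = (n, [a]) := by
          simp only [stp]; rw [if_neg h1, if_neg h2]
        rw [e]; simp [stp]
  | cons b l =>
    by_cases h1 : a = Y.inv b
    · have e : stp h (n, b :: l) a = (n, l) := by
        simp only [stp]; rw [if_pos h1]
      rw [e, h1, Y.inv_inv]
      exact stp_cons h hv
    · have e : stp h (n, b :: l) a = (n, a :: b :: l) := by
        simp only [stp]; rw [if_neg h1]
      rw [e]; simp [stp]

/-- The cycle with attached forest. -/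
noncomputable def UU (hbf : BFree h) : UGraph where
  nodes := {x : ZMod p × List Y.half // Valid h x.1 x.2}
  half := {z : {x : ZMod p × List Y.half // Valid h x.1 x.2} × Y.half //
    Y.s z.2 = pEnd h z.1.1.1 z.1.1.2}
  s z := z.1.1
  t z := ⟨stp h z.1.1.1 z.1.2, stp_valid h z.1.1.2 z.2⟩
  inv z := ⟨(⟨stp h z.1.1.1 z.1.2, stp_valid h z.1.1.2 z.2⟩, Y.inv z.1.2), by
    rw [Y.s_inv]; exact (stp_end h z.1.1.2).symm⟩
  inv_inv := by
    rintro ⟨⟨⟨⟨n, l⟩, hv⟩, a⟩, ha⟩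
    apply Subtype.ext
    apply Prod.ext
    · apply Subtype.ext
      exact stp_stp hbf hv a
    · exact Y.inv_inv a
  s_inv z := rfl

/-- projection to `Y`. -/
noncomputable def uu (hbf : BFree h) : UU hbf ⟶ Y where
  f0 x := pEnd h x.1.1 x.1.2
  f1 z := z.1.2
  comm_s z := z.2
  comm_t z := (stp_end h z.1.1.2).symm
  comm_inv z := rfl

/-- base nodes. -/
def base (hbf : BFree h) (n : ZMod p) : (UU hbf).nodes := ⟨(n, []), trivial⟩

/-- half-arcs of the cycle. -/
def baseArc (hbf : BFree h) : ZMod p × Bool → (UU hbf).half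
  | (n, true) => ⟨(base hbf n, h.f1 (n, true)), h_s_true h n⟩
  | (n, false) => ⟨(base hbf (n + 1), h.f1 (n, false)), h_s_false h n⟩

theorem uu_half_ext (hbf : BFree h) {z w : (UU hbf).half} (h1 : (UU hbf).s z = (UU hbf).s w)
    (h2 : (uu hbf).f1 z = (uu hbf).f1 w) : z = w :=
  Subtype.ext (Prod.ext h1 h2)

/-- inclusion of the cycle. -/
noncomputable def cc (hbf : BFree h) : cycleU p ⟶ UU hbf where
  f0 n := base hbf n
  f1 z := baseArc hbf z
  comm_s := by rintro ⟨n, _ | _⟩ <;> rfl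
  comm_t := by
    rintro ⟨n, _ | _⟩
    · exact Subtype.ext (stp_false hbf n)
    · exact Subtype.ext (stp_true n)
  comm_inv := by
    rintro ⟨n, _ | _⟩
    · exact uu_half_ext hbf (Subtype.ext (stp_false hbf n)) (h_inv h n false)
    · exact uu_half_ext hbf (Subtype.ext (stp_true n)) (h_inv h n true)

theorem adj_symm {X : UGraph} {x y : X.nodes} (hxy : X.adj x y) : X.adj y x := by
  obtain ⟨a, rfl, rfl⟩ := hxy
  exact ⟨X.inv a, X.s_inv a, X.t_inv a⟩

theorem conn_base (hbf : BFree h) (n : ZMod p) (l : List Y.half) (hv : Valid h n l) :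
    Relation.ReflTransGen (UU hbf).adj (base hbf n) ⟨(n, l), hv⟩ := by
  induction l with
  | nil => exact Relation.ReflTransGen.refl
  | cons b l ih =>
    refine (ih (valid_tail h hv)).tail ?_
    exact ⟨⟨(⟨(n, l), valid_tail h hv⟩, b), valid_head h hv⟩, rfl, Subtype.ext (stp_cons h hv)⟩

theorem conn_zero (hbf : BFree h) (k : ℕ) :
    Relation.ReflTransGen (UU hbf).adj (base hbf 0) (base hbf (k : ZMod p)) := by
  induction k with
  | zero => simpa using Relation.ReflTransGen.refl
  | succ k ih =>
    refine ih.tail ⟨baseArc hbf (k, true), rfl, ?_⟩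
    refine ((cc hbf).comm_t ((k : ZMod p), true)).trans ?_
    push_cast
    rfl

theorem uu_connected (hbf : BFree h) (hp : 1 < p) : (UU hbf).Connected := by
  haveI : NeZero p := ⟨by omega⟩
  have key : ∀ x, Relation.ReflTransGen (UU hbf).adj (base hbf 0) x := by
    rintro ⟨⟨n, l⟩, hv⟩
    refine Relation.ReflTransGen.trans ?_ (conn_base hbf n l hv)
    have := conn_zero hbf n.val
    rwa [ZMod.natCast_zmod_val] at this
  intro x y
  have hs : Std.Symm (UU hbf).adj := ⟨fun _ _ => adj_symm⟩
  exact (Relation.ReflTransGen.stdSymm.symm _ _ (key x)).trans (key y)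

/-- height above the cycle. -/
def ht {hbf : BFree h} (x : (UU hbf).nodes) : ℕ := x.1.2.length

theorem up_unique (hbf : BFree h) (z w : (UU hbf).half) (hs : (UU hbf).s z = (UU hbf).s w)
    (h0 : 0 < ht ((UU hbf).s z)) (hz : ht ((UU hbf).t z) ≤ ht ((UU hbf).s z))
    (hw : ht ((UU hbf).t w) ≤ ht ((UU hbf).s w)) : z = w := by
  obtain ⟨⟨⟨⟨n, l⟩, hv⟩, a⟩, ha⟩ := z
  obtain ⟨⟨x, a'⟩, ha'⟩ := w
  have hs' : (⟨(n, l), hv⟩ : {x : ZMod p × List Y.half // Valid h x.1 x.2}) = x := hs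
  subst hs'
  refine uu_half_ext hbf rfl ?_
  change a = a'
  cases l with
  | nil => exact absurd h0 (lt_irrefl 0)
  | cons b l =>
    have key : ∀ c, (stp h (n, b :: l) c).2.length ≤ (b :: l).length → c = Y.inv b := by
      intro c hc
      by_contra hne
      simp only [stp] at hc
      rw [if_neg hne] at hc
      simp at hc
    rw [key a hz, key a' hw]

theorem arc_base (hbf : BFree h) (z : (UU hbf).half) (h0 : ht ((UU hbf).s z) = 0)
    (h1 : ht ((UU hbf).t z) = 0) : ∃ b : ZMod p × Bool, z = (cc hbf).f1 b := by
  obtain ⟨⟨⟨⟨n, l⟩, hv⟩, a⟩, ha⟩ := z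
  have hl : l = [] := List.length_eq_zero_iff.mp h0
  subst hl
  have h1' : (stp h (n, []) a).2.length = 0 := h1
  by_cases e1 : a = h.f1 (n, true)
  · exact ⟨(n, true), uu_half_ext hbf rfl e1⟩
  by_cases e2 : a = h.f1 (n - 1, false)
  · refine ⟨(n - 1, false), uu_half_ext hbf ?_ e2⟩
    refine Subtype.ext ?_
    change (n, []) = (n - 1 + 1, [])
    rw [sub_add_cancel]
  · simp only [stp] at h1'
    rw [if_neg e1, if_neg e2] at h1'
    simp at h1'

theorem cycle_ht (hbf : BFree h) (q : ℕ) (hq : 1 ≤ q) (d : cycleU q ⟶ UU hbf) (hd : BFree d)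
    (n : ZMod q) : ht (d.f0 n) = 0 := by
  haveI : NeZero q := ⟨by omega⟩
  obtain ⟨m, hm⟩ := Finite.exists_max (fun n : ZMod q => ht (d.f0 n))
  have hm' : ∀ k : ZMod q, ht (d.f0 k) ≤ ht (d.f0 m) := hm
  obtain ⟨r, rfl⟩ : ∃ r, m = r + 1 := ⟨m - 1, by ring⟩
  by_contra hne
  have hpos : 0 < ht (d.f0 (r + 1)) := lt_of_lt_of_le (Nat.pos_of_ne_zero hne) (hm' n)
  have s1 := h_s_true d (r + 1)
  have s2 := h_s_false d r
  apply hd r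
  apply up_unique hbf
  · exact s1.trans s2.symm
  · rw [s1]; exact hpos
  · rw [s1, h_t_true]; exact hm' _
  · rw [s2, h_t_false]; exact hm' _

theorem cc_forest (hbf : BFree h) (hp : 1 < p) : CycleForest p (cc hbf) := by
  refine ⟨uu_connected hbf hp, ?_, ?_, ?_⟩
  · intro n m hnm
    exact congrArg (fun x : (UU hbf).nodes => x.1.1) hnm
  · rintro ⟨n, b⟩ ⟨m, b'⟩ hnm
    cases b <;> cases b'
    · have e : n + 1 = m + 1 := congrArg (fun x : (UU hbf).half => x.1.1.1.1) hnm
      rw [add_right_cancel e]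
    · have e : n + 1 = m := congrArg (fun x : (UU hbf).half => x.1.1.1.1) hnm
      have e2 : h.f1 (n, false) = h.f1 (m, true) :=
        congrArg (fun x : (UU hbf).half => x.1.2) hnm
      subst e
      exact absurd e2.symm (hbf n)
    · have e : n = m + 1 := congrArg (fun x : (UU hbf).half => x.1.1.1.1) hnm
      have e2 : h.f1 (n, true) = h.f1 (m, false) :=
        congrArg (fun x : (UU hbf).half => x.1.2) hnm
      subst e
      exact absurd e2 (hbf m)
    · have e : n = m := congrArg (fun x : (UU hbf).half => x.1.1.1.1) hnm
      rw [e]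
  · intro q hq d hd
    have H := cycle_ht hbf q hq d hd
    refine ⟨fun n => ?_, fun a => ?_⟩
    · refine ⟨(d.f0 n).1.1, Subtype.ext (Prod.ext rfl ?_)⟩
      exact List.length_eq_zero_iff.mp (H n)
    · apply arc_base
      · exact (congrArg ht (d.comm_s a)).trans (H _)
      · exact (congrArg ht (d.comm_t a)).trans (H _)

theorem uu_covering (hbf : BFree h) : IsCovering (uu hbf) := by
  intro x
  constructor
  · rintro ⟨z, hz⟩ ⟨w, hw⟩ e
    have e' : (uu hbf).f1 z = (uu hbf).f1 w := congrArg Subtype.val e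
    exact Subtype.ext (uu_half_ext hbf (hz.trans hw.symm) e')
  · rintro ⟨v, hv⟩
    exact ⟨⟨⟨(x, v), hv⟩, rfl⟩, rfl⟩

theorem covering_comp {A B C : UGraph} (f : A ⟶ B) (g : B ⟶ C) (hf : IsCovering f)
    (hg : IsCovering g) : IsCovering (f ≫ g) :=
  fun x => (hg (f.f0 x)).comp (hf x)

end Construction

/-- if `f : Y ⟶ X` is a covering and `Y` has no loops, then every
backtrack-free `p`-cycle of `Y` (`p > 1`) extends to a covering `g : U ⟶ X` of `X`
by a `p`-cycle with an attached forest, together with a morphism `u : U ⟶ Y` over `X`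
whose restriction to the `p`-cycle is the given cycle. -/
theorem stmt_11 {X Y : UGraph} (f : Y ⟶ X) (hf : IsCovering f)
    (hnoloop : ∀ u : Y.half, Y.s u ≠ Y.t u)
    (p : ℕ) (hp : 1 < p) (h : cycleU p ⟶ Y) (hbf : BFree h) :
    ∃ (U : UGraph) (g : U ⟶ X) (u : U ⟶ Y) (c : cycleU p ⟶ U),
      IsCovering g ∧ u ≫ f = g ∧ CycleForest p c ∧ c ≫ u = h := by
  refine ⟨UU hbf, uu hbf ≫ f, uu hbf, cc hbf, covering_comp _ _ (uu_covering hbf) hf, rfl,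
    cc_forest hbf hp, ?_⟩
  apply UGraph.Hom.ext
  · rfl
  · funext z
    rcases z with ⟨n, _ | _⟩ <;> rfl

end Paper
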